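/- Theorem 7.5, parts (ii) and (iv): The family $\{b_x : x\in W,\ \ell(s_0x)>\ell(x)\}$ is a basis of $\mathcal{A}_{0+}$ as a complex vector space. Consequently, for every integer $n\ge0$, the $\mathbb{C}$-subspace of $\mathcal{A}_{0+}$ spanned by $1$ together with all products of at most $n$ of the generators $\alpha_{ij}$ has dimension exactly $\#\{x\in W : \ell(x)\le n,\ \ell(s_0x)>\ell(x)\}$; equivalently, the Hilbert series of $\mathcal{A}_{0+}$ (with each $\alpha_{ij}$ in degree 1) is $h_M(z)/(1+z)$, where $h_M(z)=\sum_{x\in W}z^{\ell(x)}$ is the growth series of $W$. -/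

import Mathlib

/-!
Write `b_ω` for the product attached to a word `ω`, read from the letter `o`, and put `α_{ii} = 0`, so
that `α_{ij} + α_{jk} = α_{ik}` for all `i, j, k`.

*Spanning.* If `b_ω` ends in the letter `l`, then `b_ω α_{jk} = b_ω α_{lk} - b_ω α_{lj}` is a difference
of two products attached to longer words, so the `b_ω` with `|ω| = n` span all products of `n`
generators (`list_prod_mem`, `iSup_wordSpan`). A braid move on the word `o ω` changes the product
only by a scalar (`fProd_braid`), and a word with two equal adjacent letters has product zero. By
Matsumoto's theorem (`matsumoto`, `exists_repeat`), `b_ω` is therefore zero if `o ω` is not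
reduced, and a multiple of `b_x` with `x` the element represented by `ω` otherwise
(`bProd_mem_span`).

*Independence.* Let `ζ = -exp (π i / m_{ij})` if `m_{ij} < ∞` and `ζ = 2` otherwise, and consider the
Clifford algebra over `ℂ` generated by vectors `v_i` with `v_i ^ 2 = 1` and
`v_i v_j + v_j v_i = ζ + ζ⁻¹`. Then `(v_i v_j) ^ m_{ij} = (-1) ^ (m_{ij} + 1)` (`vec_pow`), so the `v_i`
satisfy the braid relations up to the sign `(-1) ^ (m_{ij} + 1)`. Hence so do the operators
`X_i` on Clifford-valued functions on `W` that combine the nil-Coxeter action with multiplication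
by `v_i`, and `X_i ^ 2 = 0`. In `(X_i - X_j) ^ m_{ij}` only the two alternating words survive and they
cancel because of this sign (`nilOp_sub_pow`), so `α_{ij} ↦ X_i - X_j` is a representation of the
algebra (`rep`). In it, `X_o b_x` sends the delta function at `1` to a nonzero multiple of a delta
function at `s_o x`, with an invertible Clifford coefficient (`probe_bProd`); these are linearly
independent.

The same Clifford algebra shows that `s_i s_j` has order exactly `m_{ij}` in `W` (`exactOrder`), which
the proof of Matsumoto's theorem requires; its other ingredient is the strong exchange condition
(`exchange`), obtained from the classical action of `W` on pairs of a reflection and a sign.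
-/

/-!
Theorem 7.5, parts (ii) and (iv). With notation as in Proposition 7.2 (see module docstring
of the definitions below), the family `{b_x : x ∈ W, ℓ(s_o x) > ℓ(x)}` is a basis of
`𝒜_{0+}` as a complex vector space; consequently, for every `n ≥ 0`, the span of `1` and
all products of at most `n` generators `α_{ij}` has dimension exactly
`#{x ∈ W : ℓ(x) ≤ n, ℓ(s_o x) > ℓ(x)}`; equivalently the Hilbert series of `𝒜_{0+}` is
`h_M(z)/(1+z)`.
-/

noncomputable section

namespace EvenAdd

variable {I : Type*} [DecidableEq I]

/-- Index type for the generators `α_{ij}`, `i ≠ j`. -/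
abbrev Gens (I : Type*) := {p : I × I // p.1 ≠ p.2}

/-- The generator `α_{ij}` of the free algebra. -/
def agen (i j : I) (h : i ≠ j) : FreeAlgebra ℂ (Gens I) := FreeAlgebra.ι ℂ ⟨(i, j), h⟩

/-- The defining relations of `𝒜_{0+}`: `α_{ij} + α_{ji} = 0`,
`α_{ij} + α_{jk} + α_{ki} = 0`, and `α_{ij}^{m_{ij}} = 0` when `m_{ij} < ∞`. -/
inductive Rel (M : CoxeterMatrix I) :
    FreeAlgebra ℂ (Gens I) → FreeAlgebra ℂ (Gens I) → Prop
  | anti (i j : I) (h : i ≠ j) : Rel M (agen i j h + agen j i h.symm) 0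
  | triangle (i j k : I) (hij : i ≠ j) (hjk : j ≠ k) (hki : k ≠ i) :
      Rel M (agen i j hij + agen j k hjk + agen k i hki) 0
  | nil (i j : I) (h : i ≠ j) (hm : M i j ≠ 0) : Rel M (agen i j h ^ (M i j)) 0

/-- The algebra `𝒜_{0+}`. -/
abbrev A0 (M : CoxeterMatrix I) : Type _ := RingQuot (Rel M)

/-- The quotient map. -/
def mk (M : CoxeterMatrix I) : FreeAlgebra ℂ (Gens I) →ₐ[ℂ] A0 M :=
  RingQuot.mkAlgHom ℂ _

/-- Given a starting index `prev` and a list `[i₁, …, i_n]`, the product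
`α_{prev,i₁} α_{i₁i₂} ⋯ α_{i_{n-1}i_n}` (junk value `0` if two consecutive indices coincide,
which does not occur for reduced words). -/
def bProd (M : CoxeterMatrix I) : I → List I → A0 M
  | _, [] => 1
  | prev, i :: rest =>
      (if h : prev ≠ i then mk M (agen prev i h) else 0) * bProd M i rest

/-- The span of `1` and all products of at most `n` generators `α_{ij}` in `𝒜_{0+}`:
the `n`-th piece of the degree filtration. -/
def filtration (M : CoxeterMatrix I) (n : ℕ) : Submodule ℂ (A0 M) :=
  Submodule.span ℂ
    {z : A0 M | ∃ l : List (Gens I), l.length ≤ n ∧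
      z = (l.map fun g => mk M (FreeAlgebra.ι ℂ g)).prod}

end EvenAdd

namespace EvenAdd

open CoxeterSystem

set_option linter.unusedSectionVars false

/-! ### Strong exchange and Matsumoto's theorem -/

section Cox
variable {I : Type*} {W : Type*} [Group W] {M : CoxeterMatrix I} (cs : CoxeterSystem M W)

/-- The alternating word `i j i ⋯` of length `n`, starting with `i`. -/
def alt (i j : I) : ℕ → List I
  | 0 => []
  | n + 1 => i :: alt j i n

@[simp] theorem length_alt (i j : I) (n : ℕ) : (alt i j n).length = n := by
  induction n generalizing i j with
  | zero => rfl
  | succ n ih => simp [alt, ih]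

/-- For involutions `v`, the two alternating products of length `n` differ by `(v_i v_j) ^ n`. -/
theorem alt_map_prod {G : Type*} [Monoid G] (v : I → G) (hv : ∀ i, v i * v i = 1) (i j : I)
    (n : ℕ) : ((alt i j n).map v).prod = (v i * v j) ^ n * ((alt j i n).map v).prod := by
  induction n generalizing i j with
  | zero => simp [alt]
  | succ n ih =>
    have h1 : v i * (v j * v i) ^ n = (v i * v j) ^ n * v i := by
      clear ih
      induction n with
      | zero => simp
      | succ n ih => rw [pow_succ, ← mul_assoc, ih, pow_succ]; simp only [mul_assoc]
    simp only [alt, List.map_cons, List.prod_cons]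
    rw [ih j i, ← mul_assoc, h1, pow_succ]
    simp only [mul_assoc]
    rw [← mul_assoc (v j) (v j), hv, one_mul]

theorem wordProd_alt_braid (i j : I) :
    cs.wordProd (alt i j (M i j)) = cs.wordProd (alt j i (M i j)) := by
  unfold wordProd
  rw [alt_map_prod cs.simple cs.simple_mul_simple_self, cs.simple_mul_simple_pow, one_mul]

open Classical in
/-- The action of the generator `s_i` on `W × ZMod 2`: conjugation on the first factor, and a flip of
the parity when the first component is `s_i`. The first factor is all of `W` rather than the set of
reflections, which changes nothing below. -/
noncomputable def reflStep (i : I) : Function.End (W × ZMod 2) :=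
  fun p => (cs.simple i * p.1 * cs.simple i, p.2 + if p.1 = cs.simple i then 1 else 0)

open Classical in
theorem reflStep_pow (i j : I) (n : ℕ) (t : W) (e : ZMod 2) :
    ((reflStep cs i * reflStep cs j) ^ n) (t, e) =
      ((cs.simple i * cs.simple j) ^ n * t * ((cs.simple i * cs.simple j) ^ n)⁻¹,
        e + ∑ p ∈ Finset.range (2 * n),
          if (cs.simple i * cs.simple j) ^ p * t = cs.simple j then 1 else 0) := by
  induction n with
  | zero => simp; rfl
  | succ n ih =>
    set r := cs.simple i * cs.simple j with hr
    have hsi := cs.inv_simple i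
    have hsj := cs.inv_simple j
    have hrinv : r⁻¹ = cs.simple j * cs.simple i := by simp [hr]
    -- conjugation by the reflection `s_j` inverts the rotation `r`
    have hc : ∀ k : ℕ, cs.simple j * (r ^ k) = (r ^ k)⁻¹ * cs.simple j := by
      intro k
      induction k with
      | zero => simp
      | succ k ihk =>
        rw [pow_succ, ← mul_assoc, ihk, mul_assoc, ← pow_succ, pow_succ', mul_inv_rev, hrinv, hr]
        simp only [mul_assoc]
    rw [pow_succ']
    change (reflStep cs i * reflStep cs j) (((reflStep cs i * reflStep cs j) ^ n) (t, e)) = _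
    rw [ih]
    change reflStep cs i (reflStep cs j _) = _
    simp only [reflStep, Prod.mk.injEq]
    constructor
    · rw [pow_succ', mul_inv_rev, hrinv, hr]; simp only [mul_assoc]
    · rw [show 2 * (n + 1) = 2 * n + 1 + 1 by ring, Finset.sum_range_succ, Finset.sum_range_succ,
        add_assoc, add_assoc, add_assoc]
      have e1 : (r ^ n * t * (r ^ n)⁻¹ = cs.simple j) ↔ r ^ (2 * n) * t = cs.simple j := by
        rw [mul_inv_eq_iff_eq_mul, hc, eq_inv_mul_iff_mul_eq, ← mul_assoc, ← pow_add, two_mul]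
      have e2 : (cs.simple j * (r ^ n * t * (r ^ n)⁻¹) * cs.simple j = cs.simple i) ↔
          r ^ (2 * n + 1) * t = cs.simple j := by
        have : r ^ (2 * n + 1) = r ^ n * (r * r ^ n) := by
          rw [← pow_succ', ← pow_add]; congr 1; ring
        generalize hcc : r ^ n * t * (r ^ n)⁻¹ = c
        have h0 : cs.simple j * c * cs.simple j = cs.simple i ↔ r * c = cs.simple j := by
          rw [show r * c = cs.simple j ↔ c = r⁻¹ * cs.simple j from eq_inv_mul_iff_mul_eq.symm,
            hrinv]
          constructor
          · intro h
            rw [← h]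
            simp [mul_assoc]
          · rintro rfl
            simp [mul_assoc]
        rw [h0, ← hcc, this, ← mul_assoc, mul_inv_eq_iff_eq_mul, hc, eq_inv_mul_iff_mul_eq]
        simp only [mul_assoc]
      simp only [e1, e2]

theorem reflStep_liftable : M.IsLiftable (reflStep cs) := by
  classical
  intro i j
  funext ⟨t, e⟩
  rw [reflStep_pow, cs.simple_mul_simple_pow]
  have h : ∑ p ∈ Finset.range (2 * M i j),
      (if (cs.simple i * cs.simple j) ^ p * t = cs.simple j then (1 : ZMod 2) else 0) = 0 := by
    rw [two_mul, Finset.sum_range_add]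
    simp only [pow_add, cs.simple_mul_simple_pow, one_mul]
    exact CharTwo.add_self_eq_zero _
  rw [h]; simp; rfl

open Classical in
theorem reflStep_word (ω : List I) (t : W) (e : ZMod 2) :
    (ω.map (reflStep cs)).prod (t, e) =
      (cs.wordProd ω * t * (cs.wordProd ω)⁻¹, e + (cs.rightInvSeq ω).count t) := by
  induction ω with
  | nil => simp; rfl
  | cons i ω ih =>
    rw [List.map_cons, List.prod_cons]
    change reflStep cs i ((ω.map (reflStep cs)).prod (t, e)) = _
    rw [ih]
    simp only [reflStep, Prod.mk.injEq, wordProd_cons, rightInvSeq, List.count_cons]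
    constructor
    · simp [mul_assoc]
    · have : (cs.wordProd ω * t * (cs.wordProd ω)⁻¹ = cs.simple i) ↔
        (cs.wordProd ω)⁻¹ * cs.simple i * cs.wordProd ω = t := by
        constructor
        · intro h; rw [← h]; group
        · rintro rfl; group
      simp only [this, beq_iff_eq]
      split_ifs <;> simp [add_assoc]

open Classical in
/-- The parity of the number of occurrences of `t` in the right inversion sequence of a word depends
only on the element of `W` that the word represents. -/
theorem count_rightInvSeq_congr {ω ω' : List I} (h : cs.wordProd ω = cs.wordProd ω') (t : W) :
    ((cs.rightInvSeq ω).count t : ZMod 2) = (cs.rightInvSeq ω').count t := by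
  have key : ∀ ω : List I, (ω.map (reflStep cs)).prod =
      cs.lift ⟨_, reflStep_liftable cs⟩ (cs.wordProd ω) := by
    intro ω
    rw [wordProd, map_list_prod, List.map_map]
    congr 1
    apply List.map_congr_left
    intro i _
    simp [cs.lift_apply_simple]
  have h1 := reflStep_word cs ω t 0
  have h2 := reflStep_word cs ω' t 0
  rw [key, h, ← key, h2] at h1
  simpa using (congrArg Prod.snd h1).symm

/-- The strong exchange condition: a left descent `s_i` of a word `ω`, reduced or not, is the
reflection that deletes some letter of `ω`. It occurs an odd number of times in the left inversion
sequence of a word for the same element starting with `i`, hence also in that of `ω`. -/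
theorem exchange {ω : List I} {i : I}
    (hi : cs.IsLeftDescent (cs.wordProd ω) i) :
    ∃ p, ∃ hp : p < ω.length, cs.simple i =
      cs.wordProd (ω.take p) * cs.simple ω[p] * (cs.wordProd (ω.take p))⁻¹ := by
  classical
  obtain ⟨ρ, hρ, hρe⟩ := cs.exists_isReduced (cs.simple i * cs.wordProd ω)
  have hw : cs.wordProd (i :: ρ) = cs.wordProd ω := by
    rw [wordProd_cons, ← hρe, simple_mul_simple_cancel_left]
  have hr : cs.IsReduced (i :: ρ) := by
    have := cs.isLeftDescent_iff.1 hi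
    unfold CoxeterSystem.IsReduced at *
    rw [hw, List.length_cons, ← this, hρe, hρ]
  have hmem : cs.simple i ∈ cs.leftInvSeq (i :: ρ) := by simp [leftInvSeq]
  have hc : (cs.rightInvSeq (i :: ρ).reverse).count (cs.simple i) = 1 := by
    rw [rightInvSeq_reverse, List.count_reverse]
    exact List.count_eq_one_of_mem hr.nodup_leftInvSeq hmem
  have h2 := count_rightInvSeq_congr cs (ω := (i :: ρ).reverse) (ω' := ω.reverse)
    (by simp only [wordProd_reverse, hw]) (cs.simple i)
  rw [hc] at h2
  have h3 : cs.simple i ∈ cs.leftInvSeq ω := by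
    rw [← List.mem_reverse, ← rightInvSeq_reverse]
    by_contra hn
    rw [List.count_eq_zero_of_not_mem hn] at h2
    simp at h2
  obtain ⟨p, hp, hpe⟩ := List.mem_iff_getElem.1 h3
  have hp' : p < ω.length := by simpa using hp
  exact ⟨p, hp', by rw [← hpe, getElem_leftInvSeq _ _ _ hp']⟩

theorem take_alt (i j : I) (n p : ℕ) (h : p ≤ n) : (alt i j n).take p = alt i j p := by
  induction n generalizing i j p with
  | zero => obtain rfl : p = 0 := by omega
            rfl
  | succ n ih =>
    cases p with
    | zero => rfl
    | succ p => simp [alt, ih j i p (by omega)]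

/-- If `s_i` and `s_j` are both left descents of `w`, then `w` has reduced expressions starting with
the alternating words in `i, j` of every length `n ≤ m_{ij}`. The exchange condition applied to an
expression starting with `i j ⋯` of length `n` cannot delete one of these `n` letters, since this
would give `s_i s_j` an order less than `m_{ij}`; so the alternating prefix grows. -/
theorem exists_alt_start {w : W} {i j : I}
    (hord : ∀ k, 0 < k → (cs.simple i * cs.simple j) ^ k = 1 → M i j ≠ 0 ∧ M i j ≤ k)
    (hi : cs.IsLeftDescent w i) (hj : cs.IsLeftDescent w j)
    (n : ℕ) (hn : M i j ≠ 0 → n ≤ M i j) :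
    (∃ ρ, cs.IsReduced (alt i j n ++ ρ) ∧ cs.wordProd (alt i j n ++ ρ) = w) ∧
    (∃ ρ, cs.IsReduced (alt j i n ++ ρ) ∧ cs.wordProd (alt j i n ++ ρ) = w) := by
  induction n with
  | zero =>
    obtain ⟨ρ, h, h'⟩ := cs.exists_isReduced w
    exact ⟨⟨ρ, h, h'.symm⟩, ⟨ρ, h, h'.symm⟩⟩
  | succ n ih =>
    have key : ∀ i j : I,
        (∀ k, 0 < k → (cs.simple i * cs.simple j) ^ k = 1 → M i j ≠ 0 ∧ M i j ≤ k) →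
        cs.IsLeftDescent w j → (M i j ≠ 0 → n + 1 ≤ M i j) →
        (∃ ρ, cs.IsReduced (alt i j n ++ ρ) ∧ cs.wordProd (alt i j n ++ ρ) = w) →
        (∃ ρ, cs.IsReduced (alt j i (n + 1) ++ ρ) ∧ cs.wordProd (alt j i (n + 1) ++ ρ) = w) := by
      rintro i j hord hj hn ⟨ρ, hρ, rfl⟩
      obtain ⟨p, hp, he⟩ := exchange cs hj
      have herase : cs.simple j * cs.wordProd (alt i j n ++ ρ) =
          cs.wordProd ((alt i j n ++ ρ).eraseIdx p) := by
        rw [← getD_leftInvSeq_mul_wordProd, getD_leftInvSeq, List.getElem?_eq_getElem hp, he]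
        rfl
      by_cases hpn : p < n
      · exfalso
        have htk : ∀ q, q ≤ n → (alt i j n ++ ρ).take q = alt i j q := by
          intro q hq
          rw [List.take_append_of_le_length (by simpa using hq), take_alt _ _ _ _ hq]
        -- the reflection removed at position `p` lies in the dihedral group of `i, j`
        have h1 : cs.wordProd (alt i j (p + 1)) =
            cs.wordProd (alt i j p) * cs.simple (alt i j n ++ ρ)[p] := by
          rw [← htk (p + 1) hpn, List.take_succ_eq_append_getElem hp, wordProd_append,
            htk p hpn.le, wordProd_singleton]
        rw [htk p hpn.le, ← h1] at he
        have h4 : ∀ (p : ℕ) (i j : I), cs.wordProd (alt i j (p + 1)) * (cs.wordProd (alt i j p))⁻¹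
            = (cs.simple i * cs.simple j) ^ p * cs.simple i := by
          intro p
          induction p with
          | zero => intro i j; simp [alt]
          | succ p ihp =>
            intro i j
            change cs.wordProd (i :: alt j i (p + 1)) * (cs.wordProd (i :: alt j i p))⁻¹ = _
            rw [wordProd_cons, wordProd_cons, mul_inv_rev,
              show cs.simple i * cs.wordProd (alt j i (p + 1)) *
                ((cs.wordProd (alt j i p))⁻¹ * (cs.simple i)⁻¹) = cs.simple i *
                (cs.wordProd (alt j i (p + 1)) * (cs.wordProd (alt j i p))⁻¹) * (cs.simple i)⁻¹ by
                simp only [mul_assoc], ihp, inv_simple, pow_succ']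
            have h1 : cs.simple i * (cs.simple j * cs.simple i) ^ p
                = (cs.simple i * cs.simple j) ^ p * cs.simple i := by
              clear ihp
              induction p with
              | zero => simp
              | succ n ih => rw [pow_succ, ← mul_assoc, ih, pow_succ]; simp only [mul_assoc]
            rw [← mul_assoc, h1, ← pow_succ', pow_succ]
            simp only [mul_assoc]
        rw [h4] at he
        have h5 : (cs.simple i * cs.simple j) ^ (p + 1) = 1 := by
          rw [pow_succ, ← mul_assoc, ← he, simple_mul_simple_self]
        obtain ⟨h6, h7⟩ := hord _ (Nat.succ_pos p) h5
        have := hn h6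
        omega
      · have hpn' : n ≤ p := not_lt.1 hpn
        rw [List.eraseIdx_append_of_length_le (by simpa using hpn')] at herase
        have hp2 : p - n < ρ.length := by
          simp at hp; omega
        have hw : cs.wordProd (alt j i (n + 1) ++ ρ.eraseIdx (p - (alt i j n).length)) =
            cs.wordProd (alt i j n ++ ρ) := by
          rw [alt, List.cons_append, wordProd_cons, ← herase, simple_mul_simple_cancel_left]
        refine ⟨_, ?_, hw⟩
        unfold CoxeterSystem.IsReduced at hρ ⊢
        rw [hw, hρ]
        simp [List.length_eraseIdx, hp2]
        omega
    obtain ⟨h1, h2⟩ := ih (fun h => by have := hn h; omega)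
    have hord' : ∀ k, 0 < k → (cs.simple j * cs.simple i) ^ k = 1 → M j i ≠ 0 ∧ M j i ≤ k := by
      intro k hk h
      rw [M.symmetric]
      apply hord k hk
      rw [← inv_inj, ← inv_pow]; simpa using h
    exact ⟨key j i hord' hi (by rwa [M.symmetric]) h2, key i j hord hj hn h1⟩

/-- `BraidStep M a b`: the word `b` arises from `a` by replacing a factor `i j i ⋯` of length
`m_{ij} < ∞` by `j i j ⋯`. -/
def BraidStep (M : CoxeterMatrix I) (a b : List I) : Prop :=
  ∃ p i j q, i ≠ j ∧ M i j ≠ 0 ∧ a = p ++ (alt i j (M i j) ++ q) ∧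
    b = p ++ (alt j i (M i j) ++ q)

/-- Equivalence of words under sequences of braid moves. -/
abbrev BraidRel (M : CoxeterMatrix I) : List I → List I → Prop :=
  Relation.ReflTransGen (BraidStep M)

theorem BraidStep.symm {a b : List I} (h : BraidStep M a b) : BraidStep M b a := by
  obtain ⟨p, i, j, q, hij, hm, rfl, rfl⟩ := h
  exact ⟨p, j, i, q, hij.symm, by rwa [M.symmetric], by rw [M.symmetric], by rw [M.symmetric]⟩

theorem BraidRel.cons (i : I) {a b : List I} (h : BraidRel M a b) :
    BraidRel M (i :: a) (i :: b) := by
  refine Relation.ReflTransGen.lift (List.cons i) ?_ _ _ h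
  rintro _ _ ⟨p, k, j, q, hij, hm, rfl, rfl⟩
  exact ⟨i :: p, k, j, q, hij, hm, rfl, rfl⟩

/-- The product `s_i s_j` has order exactly `m_{ij}` in `W`, for all `i ≠ j` (and infinite order if
`m_{ij} = ∞`, which is encoded as `M i j = 0`). -/
def ExactOrder : Prop := ∀ i j : I, i ≠ j → ∀ k, 0 < k →
  (cs.simple i * cs.simple j) ^ k = 1 → M i j ≠ 0 ∧ M i j ≤ k

variable {cs}

theorem isReduced_cons {i : I} {a : List I} (h : cs.IsReduced (i :: a)) : cs.IsReduced a :=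
  h.drop 1

theorem descent_cons {i : I} {a : List I} (h : cs.IsReduced (i :: a)) :
    cs.IsLeftDescent (cs.wordProd (i :: a)) i := by
  have h' := isReduced_cons h
  unfold CoxeterSystem.IsReduced IsLeftDescent at *
  rw [h, wordProd_cons, simple_mul_simple_cancel_left, h']
  simp

/-- Matsumoto's theorem: two reduced words for the same element are related by braid moves. The
length `n` of `a` is a parameter for the sake of the induction. -/
theorem matsumoto (hord : ExactOrder cs) (n : ℕ) {a b : List I} (hn : a.length = n)
    (ha : cs.IsReduced a)
    (hb : cs.IsReduced b) (hab : cs.wordProd a = cs.wordProd b) : BraidRel M a b := by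
  induction n generalizing a b with
  | zero =>
    have h : b.length = 0 := by rw [← hb.eq, ← hab, ha.eq, hn]
    rw [List.length_eq_zero_iff] at hn h
    rw [hn, h]
  | succ n ih =>
    have hl : b.length = n + 1 := by rw [← hb.eq, ← hab, ha.eq, hn]
    obtain ⟨i, a, rfl⟩ := List.exists_cons_of_length_eq_add_one hn
    obtain ⟨j, b, rfl⟩ := List.exists_cons_of_length_eq_add_one hl
    -- two words with the same first letter
    have same : ∀ (i : I) (a b : List I), a.length = n → cs.IsReduced (i :: a) →
        cs.IsReduced (i :: b) → cs.wordProd (i :: a) = cs.wordProd (i :: b) →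
        BraidRel M (i :: a) (i :: b) := by
      intro i a b hl ha hb h
      refine BraidRel.cons i (ih hl (isReduced_cons ha) (isReduced_cons hb) ?_)
      simpa [wordProd_cons] using h
    by_cases hij : i = j
    · subst hij
      exact same i a b (by simpa using hn) ha hb hab
    have hdi := descent_cons ha
    have hdj := descent_cons hb
    rw [← hab] at hdj
    have hM : M i j ≠ 0 := by
      intro h0
      obtain ⟨⟨ρ, h1, h2⟩, -⟩ := exists_alt_start cs (hord i j hij) hdi hdj
        (n + 2) (fun h => absurd h0 h)
      have := h1.eq
      rw [h2, ha.eq, hn] at this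
      simp at this
      omega
    obtain ⟨⟨ρ, h1, h2⟩, -⟩ := exists_alt_start cs (hord i j hij) hdi hdj
      (M i j) (fun _ => le_rfl)
    have h2' : cs.wordProd (alt j i (M i j) ++ ρ) = cs.wordProd (i :: a) := by
      rw [← h2, wordProd_append, wordProd_append, wordProd_alt_braid]
    have h1' : cs.IsReduced (alt j i (M i j) ++ ρ) := by
      have := h1.eq
      unfold CoxeterSystem.IsReduced
      rw [h2', ← h2, this]
      simp
    have hst : BraidRel M (alt i j (M i j) ++ ρ) (alt j i (M i j) ++ ρ) :=
      Relation.ReflTransGen.single ⟨[], i, j, ρ, hij, hM, rfl, rfl⟩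
    obtain ⟨m, hm⟩ := Nat.exists_eq_succ_of_ne_zero hM
    rw [hm] at h1 h2 h1' h2' hst
    refine ((same i a _ (by simpa using hn) ha h1 h2.symm).trans hst).trans ?_
    refine same j _ b ?_ h1' hb (h2'.trans hab)
    have := h1'.eq
    rw [h2', ha.eq, hn] at this
    simpa [alt] using this.symm

/-- A word that is not reduced can be brought by braid moves to a word with a repeated letter. -/
theorem exists_repeat (hord : ExactOrder cs) {a : List I} (ha : ¬ cs.IsReduced a) :
    ∃ p i q, BraidRel M a (p ++ i :: i :: q) := by
  induction a with
  | nil => exact absurd (by simp [CoxeterSystem.IsReduced]) ha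
  | cons i a ih =>
    by_cases h : cs.IsReduced a
    · have hd : cs.IsLeftDescent (cs.wordProd a) i := by
        by_contra hd
        apply ha
        rw [not_isLeftDescent_iff] at hd
        unfold CoxeterSystem.IsReduced
        rw [wordProd_cons, hd, h.eq]; rfl
      obtain ⟨ρ, hρ, hρe⟩ := cs.exists_isReduced (cs.simple i * cs.wordProd a)
      have hw : cs.wordProd (i :: ρ) = cs.wordProd a := by
        rw [wordProd_cons, ← hρe, simple_mul_simple_cancel_left]
      have hr : cs.IsReduced (i :: ρ) := by
        have := cs.isLeftDescent_iff.1 hd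
        unfold CoxeterSystem.IsReduced at *
        rw [hw, List.length_cons, ← this, hρe, hρ]
      exact ⟨[], i, ρ, BraidRel.cons i (matsumoto hord _ rfl h hr hw.symm)⟩
    · obtain ⟨p, k, q, hb⟩ := ih h
      exact ⟨i :: p, k, q, BraidRel.cons i hb⟩
end Cox

/-! ### Products attached to words, and spanning -/

section Alg
variable {I : Type*} [DecidableEq I] (M : CoxeterMatrix I)

/-- The element `α_{ij}` of `𝒜_{0+}`, with the convention `α_{ii} = 0`. -/
def al (i j : I) : A0 M := if h : i ≠ j then mk M (agen i j h) else 0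

theorem mk_rel {a b : FreeAlgebra ℂ (Gens I)} (h : Rel M a b) : mk M a = mk M b :=
  RingQuot.mkAlgHom_rel ℂ h

@[simp] theorem al_self (i : I) : al M i i = 0 := by simp [al]

theorem al_anti (i j : I) : al M j i = - al M i j := by
  by_cases h : i = j
  · subst h; simp
  · have := mk_rel M (Rel.anti (M := M) i j h)
    rw [map_add, map_zero] at this
    simp only [al, ne_eq, h, Ne.symm h, not_false_eq_true, dif_pos]
    exact eq_neg_of_add_eq_zero_right this

/-- With the convention `α_{ii} = 0` the triangle relation holds for all triples of indices. -/
theorem al_add (i j k : I) : al M i j + al M j k = al M i k := by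
  by_cases hij : i = j
  · subst hij; simp
  by_cases hjk : j = k
  · subst hjk; simp
  by_cases hki : k = i
  · subst hki; rw [al_anti M j k]; simp
  have := mk_rel M (Rel.triangle (M := M) i j k hij hjk hki)
  rw [map_add, map_add, map_zero] at this
  rw [al_anti M k i, ← sub_eq_zero, sub_neg_eq_add]
  simpa [al, hij, hjk, hki] using this

theorem al_pow (i j : I) (hm : M i j ≠ 0) : al M i j ^ M i j = 0 := by
  by_cases h : i = j
  · subst h; simp
  · have := mk_rel M (Rel.nil (M := M) i j h hm)
    rw [map_pow, map_zero] at this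
    simpa [al, h] using this

theorem al_anti_pow (i j : I) (k : ℕ) : al M j i ^ k = (-1 : ℂ) ^ k • al M i j ^ k := by
  induction k with
  | zero => simp
  | succ k ih =>
    have e : al M j i = (-1 : ℂ) • al M i j := (al_anti M i j).trans (neg_one_smul ℂ _).symm
    rw [pow_succ, ih, e, pow_succ, pow_succ, smul_mul_assoc, mul_smul_comm, smul_smul]

theorem bProd_cons (p i : I) (ω : List I) : bProd M p (i :: ω) = al M p i * bProd M i ω := rfl

/-- The product `α_{i₁i₂} ⋯ α_{i_{n-1}i_n}` attached to the word `[i₁, …, i_n]`, so that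
`bProd M o ω = fProd M (o :: ω)`. -/
def fProd : List I → A0 M
  | [] => 1
  | i :: ω => bProd M i ω

theorem bProd_alt (i j : I) (k : ℕ) (b : List I) :
    ∃ c : ℂ, c ≠ 0 ∧ bProd M i (alt j i k ++ b) =
      c • (al M i j ^ k * bProd M (if Even k then i else j) b) := by
  induction k generalizing i j with
  | zero => exact ⟨1, one_ne_zero, by simp [alt]⟩
  | succ k ih =>
    obtain ⟨c, hc0, hc⟩ := ih j i
    refine ⟨c * (-1) ^ k, by simp [hc0], ?_⟩
    have hlast : (if Even (k + 1) then i else j) = if Even k then j else i := by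
      by_cases h : Even k <;> simp [h, Nat.even_add_one]
    rw [alt, List.cons_append, bProd_cons, hc, hlast, al_anti_pow M i j, pow_succ',
      smul_mul_assoc, smul_smul, mul_smul_comm, mul_assoc]

/-- Braid moves rescale `fProd`. Up to scalars both alternating words give `α_{ij} ^ (m_{ij} - 1)`,
and the adjacent factors `α_{ri}`, `α_{rj}` (or `α_{ia}`, `α_{ja}`) agree modulo `α_{ij}`, which is
killed by it. The same scalar serves for `fProd` and for `bProd M r`, whatever `r` is: this is what
makes the induction on the prefix `p` work. -/
theorem fProd_braid (p : List I) (i j : I) (hm : M i j ≠ 0) (q : List I) :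
    ∃ c : ℂ, fProd M (p ++ (alt i j (M i j) ++ q)) = c • fProd M (p ++ (alt j i (M i j) ++ q)) ∧
      ∀ r, bProd M r (p ++ (alt i j (M i j) ++ q)) =
        c • bProd M r (p ++ (alt j i (M i j) ++ q)) := by
  induction p with
  | cons a p ih =>
    obtain ⟨c, -, h⟩ := ih
    refine ⟨c, h a, fun r => ?_⟩
    rw [List.cons_append, List.cons_append, bProd_cons, bProd_cons, h a, mul_smul_comm]
  | nil =>
    obtain ⟨k, hk⟩ := Nat.exists_eq_succ_of_ne_zero hm
    have hp : al M i j ^ (k + 1) = 0 := by rw [← Nat.succ_eq_add_one, ← hk, al_pow M i j hm]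
    rw [hk]
    simp only [List.nil_append, alt, List.cons_append, fProd, bProd_cons]
    obtain ⟨c, hc0, hc⟩ := bProd_alt M i j k q
    obtain ⟨d, hd0, hd⟩ := bProd_alt M j i k q
    -- the next letter only matters modulo `α_{ij}`, which is killed by `α_{ij} ^ k`
    have hZ : al M i j ^ k * bProd M i q = al M i j ^ k * bProd M j q := by
      cases q with
      | nil => rfl
      | cons a q =>
        rw [bProd_cons, bProd_cons, ← al_add M i j a, add_mul, mul_add, ← mul_assoc, ← pow_succ,
          hp, zero_mul, zero_add]
    have hX : bProd M i (alt j i k ++ q) = c • (al M i j ^ k * bProd M i q) := by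
      rw [hc]; split_ifs
      · rfl
      · rw [hZ]
    have hY : bProd M j (alt i j k ++ q) = (d * (-1) ^ k) • (al M i j ^ k * bProd M i q) := by
      rw [hd, al_anti_pow M i j]
      have : al M i j ^ k * bProd M (if Even k then j else i) q = al M i j ^ k * bProd M i q := by
        split_ifs
        · rw [hZ]
        · rfl
      rw [smul_mul_assoc, smul_smul, this]
    have hXY : bProd M i (alt j i k ++ q) =
        (c / (d * (-1) ^ k)) • bProd M j (alt i j k ++ q) := by
      rw [hX, hY, smul_smul, div_mul_cancel₀]
      simp [hd0]
    refine ⟨_, hXY, fun r => ?_⟩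
    have hr : al M r i * bProd M j (alt i j k ++ q) = al M r j * bProd M j (alt i j k ++ q) := by
      rw [← al_add M r i j, add_mul, hY, mul_smul_comm (_) (al M i j), ← mul_assoc (al M i j),
        ← pow_succ', hp, zero_mul, smul_zero, add_zero]
    rw [hXY, mul_smul_comm, hr]

theorem fProd_braidRel {a b : List I} (h : BraidRel M a b) :
    ∃ c : ℂ, fProd M a = c • fProd M b := by
  induction h with
  | refl => exact ⟨1, by simp⟩
  | tail _ hs ih =>
    obtain ⟨c, hc⟩ := ih
    obtain ⟨p, i, j, q, -, hm, rfl, rfl⟩ := hs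
    obtain ⟨d, hd, -⟩ := fProd_braid M p i j hm q
    exact ⟨c * d, by rw [hc, hd, mul_smul]⟩

theorem bProd_repeat (p : List I) (i : I) (q : List I) (r : I) :
    bProd M r (p ++ i :: i :: q) = 0 := by
  induction p generalizing r with
  | nil => simp [bProd_cons]
  | cons a p ih => rw [List.cons_append, bProd_cons, ih, mul_zero]

theorem fProd_repeat (p : List I) (i : I) (q : List I) : fProd M (p ++ i :: i :: q) = 0 := by
  cases p with
  | nil => simp [fProd, bProd_cons]
  | cons a p => exact bProd_repeat M p i q a

theorem bProd_concat (p : I) (ω : List I) (k : I) :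
    bProd M p (ω ++ [k]) = bProd M p ω * al M (ω.getLastD p) k := by
  induction ω generalizing p with
  | nil => simp [bProd_cons, bProd]
  | cons i ω ih => rw [List.cons_append, bProd_cons, ih, bProd_cons, mul_assoc, List.getLastD_cons]

/-- The span of the elements `bProd M o ω` for words `ω` of length `n`. -/
def wordSpan (o : I) (n : ℕ) : Submodule ℂ (A0 M) :=
  Submodule.span ℂ (bProd M o '' {ω | ω.length = n})

/-- Right multiplication by `α_{jk} = α_{lk} - α_{lj}`, where `l` is the last letter of a word,
extends this word by `k` and by `j`. -/
theorem wordSpan_mul (o : I) (n : ℕ) (j k : I) {z : A0 M} (hz : z ∈ wordSpan M o n) :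
    z * al M j k ∈ wordSpan M o (n + 1) := by
  induction hz using Submodule.span_induction with
  | zero => simp
  | add x y _ _ hx hy => rw [add_mul]; exact add_mem hx hy
  | smul c x _ hx => rw [smul_mul_assoc]; exact Submodule.smul_mem _ _ hx
  | mem x hx =>
    obtain ⟨ω, hω, rfl⟩ := hx
    have hω : ω.length = n := hω
    have e : bProd M o ω * al M j k = bProd M o (ω ++ [k]) - bProd M o (ω ++ [j]) := by
      rw [bProd_concat, bProd_concat, ← mul_sub, ← al_add M (ω.getLastD o) j k, add_sub_cancel_left]
    rw [e]
    exact sub_mem (Submodule.subset_span ⟨_, by simp [hω], rfl⟩)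
      (Submodule.subset_span ⟨_, by simp [hω], rfl⟩)

theorem mk_ι (g : Gens I) : mk M (FreeAlgebra.ι ℂ g) = al M g.1.1 g.1.2 := by
  obtain ⟨⟨i, j⟩, h⟩ := g
  have h : i ≠ j := h
  simp only [al, dif_pos h]; rfl

theorem list_prod_mem (o : I) (l : List (Gens I)) :
    (l.map fun g => mk M (FreeAlgebra.ι ℂ g)).prod ∈ wordSpan M o l.length := by
  induction l using List.reverseRecOn with
  | nil => exact Submodule.subset_span ⟨[], rfl, rfl⟩
  | append_singleton l g ih =>
    rw [List.map_append, List.prod_append, List.length_append]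
    simp only [List.map_cons, List.map_nil, List.prod_cons, List.prod_nil, mul_one, mk_ι]
    simp only [mk_ι] at ih
    exact wordSpan_mul M o _ _ _ ih

theorem bProd_mem_filtration (o : I) (ω : List I) {n : ℕ} (h : ω.length ≤ n) :
    bProd M o ω ∈ filtration M n := by
  have key : bProd M o ω = 0 ∨ ∃ l : List (Gens I), l.length = ω.length ∧
      bProd M o ω = (l.map fun g => mk M (FreeAlgebra.ι ℂ g)).prod := by
    clear h
    induction ω generalizing o with
    | nil => exact Or.inr ⟨[], rfl, rfl⟩
    | cons i ω ih =>
      by_cases hoi : o = i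
      · left; subst hoi; simp [bProd_cons]
      rcases ih i with h | ⟨l, hl, h⟩
      · left; rw [bProd_cons, h, mul_zero]
      · exact Or.inr ⟨⟨(o, i), hoi⟩ :: l, by simp [hl], by
          rw [bProd_cons, h, List.map_cons, List.prod_cons, mk_ι]⟩
  rcases key with h0 | ⟨l, hl, h0⟩
  · rw [h0]; exact zero_mem _
  · exact Submodule.subset_span ⟨l, by omega, h0⟩

theorem iSup_wordSpan (o : I) : (⨆ n, wordSpan M o n) = ⊤ := by
  set S := ⨆ n, wordSpan M o n with hS
  have hgen : ∀ j k : I, ∀ z ∈ S, z * al M j k ∈ S := by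
    intro j k z hz
    rw [hS] at hz
    induction hz using Submodule.iSup_induction' with
    | mem n x hx => exact Submodule.mem_iSup_of_mem (n + 1) (wordSpan_mul M o n j k hx)
    | zero => simp
    | add x y _ _ hx hy => rw [add_mul]; exact add_mem hx hy
  have hall : ∀ a : FreeAlgebra ℂ (Gens I), ∀ z ∈ S, z * mk M a ∈ S := by
    intro a
    induction a using FreeAlgebra.induction with
    | grade0 r =>
      intro z hz
      rw [AlgHom.commutes, ← Algebra.commutes, ← Algebra.smul_def]
      exact S.smul_mem r hz
    | grade1 g => intro z hz; rw [mk_ι]; exact hgen _ _ z hz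
    | mul a b ha hb => intro z hz; rw [map_mul, ← mul_assoc]; exact hb _ (ha _ hz)
    | add a b ha hb => intro z hz; rw [map_add, mul_add]; exact add_mem (ha _ hz) (hb _ hz)
  rw [eq_top_iff]
  rintro z -
  obtain ⟨a, rfl⟩ := RingQuot.mkAlgHom_surjective ℂ (Rel M) z
  have h1 : (1 : A0 M) ∈ S :=
    Submodule.mem_iSup_of_mem 0 (Submodule.subset_span ⟨[], rfl, rfl⟩)
  rw [← one_mul (RingQuot.mkAlgHom ℂ (Rel M) a)]
  exact hall a 1 h1

variable {W : Type*} [Group W] {M} (cs : CoxeterSystem M W)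

/-- Each `bProd M o ω` is zero, if `o :: ω` is not reduced, or a multiple of the element `b_x` with
`x` the element represented by `ω`. -/
theorem bProd_mem_span (hord : ExactOrder cs) (o : I) (w : W → List I)
    (hw : ∀ x : W, cs.wordProd (w x) = x ∧ cs.IsReduced (w x)) (ω : List I) :
    bProd M o ω = 0 ∨ ∃ x, cs.length x = ω.length ∧ cs.length x < cs.length (cs.simple o * x) ∧
      ∃ c : ℂ, bProd M o ω = c • bProd M o (w x) := by
  by_cases h : cs.IsReduced (o :: ω)
  · right
    have h' := isReduced_cons h
    refine ⟨cs.wordProd ω, h', ?_, ?_⟩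
    · rw [← wordProd_cons, h.eq, h'.eq]; simp
    · have hb : BraidRel M (o :: ω) (o :: w (cs.wordProd ω)) := by
        refine matsumoto hord _ rfl h ?_ ?_
        · unfold CoxeterSystem.IsReduced
          have h2 := (hw (cs.wordProd ω)).2.eq
          rw [(hw _).1, h'.eq] at h2
          rw [wordProd_cons, (hw _).1, ← wordProd_cons, h.eq, List.length_cons, List.length_cons, h2]
        · rw [wordProd_cons, wordProd_cons, (hw _).1]
      exact fProd_braidRel M hb
  · left
    obtain ⟨p, i, q, hb⟩ := exists_repeat hord h
    obtain ⟨c, hc⟩ := fProd_braidRel M hb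
    rw [fProd_repeat, smul_zero] at hc
    exact hc

end Alg

/-! ### The Clifford algebra of a Coxeter matrix -/

section Cliff
variable {I : Type*} [Fintype I] [DecidableEq I] (M : CoxeterMatrix I)

/-- A number `ζ` with `ζ ^ m = (-1) ^ (m + 1)`, where `m = m_{ij}`, for which `ζ ^ 2` has order exactly
`m`; it is `-exp (π i / m)`. For `m = ∞` it is `2`, which is not a root of unity. -/
def root (i j : I) : ℂ :=
  if M i j = 0 then 2 else -Complex.exp (Real.pi * Complex.I / M i j)

theorem root_ne_zero (i j : I) : root M i j ≠ 0 := by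
  unfold root; split_ifs
  · norm_num
  · simp [Complex.exp_ne_zero]

theorem root_symm (i j : I) : root M i j = root M j i := by
  unfold root; rw [M.symmetric]

theorem root_self (i : I) : root M i i = 1 := by
  simp [root, Complex.exp_pi_mul_I]

theorem root_pow (i j : I) (h : M i j ≠ 0) : root M i j ^ M i j = (-1) ^ (M i j + 1) := by
  have : Complex.exp (Real.pi * Complex.I / M i j) ^ M i j = -1 := by
    rw [← Complex.exp_nat_mul, mul_div_cancel₀, Complex.exp_pi_mul_I]
    exact_mod_cast h
  rw [root, if_neg h, neg_pow, this, pow_succ]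

theorem root_sq_pow (i j : I) (k : ℕ) (hk : 0 < k) (h : root M i j ^ (2 * k) = 1) :
    M i j ≠ 0 ∧ M i j ≤ k := by
  by_cases h0 : M i j = 0
  · exfalso
    rw [root, if_pos h0] at h
    have : (2 : ℝ) ^ (2 * k) = 1 := by exact_mod_cast h
    have h2 : (1 : ℝ) < 2 ^ (2 * k) := one_lt_pow₀ (by norm_num) (by omega)
    linarith
  · refine ⟨h0, ?_⟩
    have hp := Complex.isPrimitiveRoot_exp _ h0
    have : root M i j ^ 2 = Complex.exp (2 * Real.pi * Complex.I / M i j) := by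
      rw [root, if_neg h0, neg_sq, ← Complex.exp_nat_mul]
      congr 1; push_cast; ring
    rw [pow_mul, this] at h
    exact Nat.le_of_dvd hk (hp.dvd_of_pow_eq_one k h)

theorem root_ne_inv (i j : I) (hij : i ≠ j) : root M i j ≠ (root M i j)⁻¹ := by
  intro h
  have h1 : root M i j ^ (2 * 1) = 1 := by
    rw [mul_one, sq]; nth_rw 2 [h]; exact mul_inv_cancel₀ (root_ne_zero M i j)
  have := root_sq_pow M i j 1 one_pos h1
  exact M.off_diagonal i j hij (by omega)

/-- The quadratic form on `ℂ ^ I` whose symmetric bilinear form has Gram matrix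
`(ζ_{ij} + ζ_{ij}⁻¹) / 2`, that is `-cos (π / m_{ij})` for `m_{ij} < ∞`, and `1` on the diagonal. -/
def form : QuadraticForm ℂ (I → ℂ) :=
  LinearMap.BilinMap.toQuadraticMap
    (Matrix.toBilin' (Matrix.of fun i j => (root M i j + (root M i j)⁻¹) / 2))

theorem form_single (i : I) : form M (Pi.single i 1) = 1 := by
  unfold form
  rw [LinearMap.BilinMap.toQuadraticMap_apply, Matrix.toBilin'_single, Matrix.of_apply, root_self]
  norm_num

theorem form_polar (i j : I) : QuadraticMap.polar (form M) (Pi.single i 1) (Pi.single j 1) =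
    root M i j + (root M i j)⁻¹ := by
  unfold form
  rw [LinearMap.BilinMap.polar_toQuadraticMap, Matrix.toBilin'_single, Matrix.toBilin'_single,
    Matrix.of_apply, Matrix.of_apply, root_symm M j i]
  ring

/-- The Clifford algebra of `form M`. -/
abbrev Cl : Type _ := CliffordAlgebra (form M)

/-- The image `v_i` in the Clifford algebra of the basis vector with index `i`. -/
def vec (i : I) : Cl M := CliffordAlgebra.ι (form M) (Pi.single i 1)

theorem vec_sq (i : I) : vec M i * vec M i = 1 := by
  rw [vec, CliffordAlgebra.ι_sq_scalar, form_single, map_one]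

theorem vec_anticomm (i j : I) : vec M i * vec M j + vec M j * vec M i =
    algebraMap ℂ _ (root M i j + (root M i j)⁻¹) := by
  rw [vec, vec, CliffordAlgebra.ι_mul_ι_add_swap, form_polar]

instance : Nontrivial (Cl M) :=
  haveI : Invertible (2 : ℂ) := invertibleOfNonzero two_ne_zero
  inferInstance

open Polynomial in
/-- `v_i v_j` is a root of `(X - ζ) (X - ζ⁻¹)`. -/
theorem vec_poly (i j : I) : aeval (vec M i * vec M j)
    ((X - C (root M i j)) * (X - C (root M i j)⁻¹)) = 0 := by
  set u := vec M i * vec M j with hu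
  have h := congrArg (· * u) (vec_anticomm M i j)
  have h2 : vec M j * vec M i * u = 1 := by
    rw [hu, mul_assoc, ← mul_assoc (vec M i), vec_sq, one_mul, vec_sq]
  simp only [add_mul, h2] at h
  rw [← hu] at h
  have e : ((X - C (root M i j)) * (X - C (root M i j)⁻¹)) =
      X * X + 1 - C (root M i j + (root M i j)⁻¹) * X := by
    have : C (root M i j) * C (root M i j)⁻¹ = (1 : ℂ[X]) := by
      rw [← C_mul, mul_inv_cancel₀ (root_ne_zero M i j), C_1]
    rw [C_add]
    linear_combination this
  rw [e]
  simp only [map_sub, map_add, map_mul, aeval_X, aeval_C, map_one]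
  rw [← map_add, h, sub_self]

open Polynomial in
/-- `(v_i v_j) ^ m = (-1) ^ (m + 1)`, because both (distinct) roots `ζ`, `ζ⁻¹` of the annihilating
polynomial of `v_i v_j` satisfy this equation. -/
theorem vec_pow (i j : I) (h : M i j ≠ 0) :
    (vec M i * vec M j) ^ M i j = (-1) ^ (M i j + 1) := by
  by_cases hij : i = j
  · subst hij; simp [vec_sq]
  have hr := root_pow M i j h
  have hr' : (root M i j)⁻¹ ^ M i j = (-1) ^ (M i j + 1) := by
    rw [inv_pow, hr, ← inv_pow]; norm_num
  have hd : (X - C (root M i j)) * (X - C (root M i j)⁻¹) ∣ X ^ M i j - C ((-1) ^ (M i j + 1)) := by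
    refine IsCoprime.mul_dvd (isCoprime_X_sub_C_of_isUnit_sub ?_) ?_ ?_
    · exact (sub_ne_zero.2 (root_ne_inv M i j hij)).isUnit
    · rw [dvd_iff_isRoot]; simp [hr]
    · rw [dvd_iff_isRoot, IsRoot.def]; simp only [eval_sub, eval_pow, eval_X, eval_C, hr', sub_self]
  obtain ⟨Q, hQ⟩ := hd
  have := congrArg (aeval (vec M i * vec M j)) hQ
  rw [map_mul, vec_poly, zero_mul] at this
  simpa [sub_eq_zero] using this

open Polynomial in
/-- If `(v_i v_j) ^ (2 k) = 1` then `ζ ^ (2 k) = 1`: otherwise `(X - ζ) (X - ζ⁻¹)` would be coprime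
to `X ^ (2 k) - 1`, and both annihilate `v_i v_j` in a nontrivial algebra. -/
theorem root_pow_eq_one_of_vec_pow (i j : I) (k : ℕ) (h : (vec M i * vec M j) ^ (2 * k) = 1) :
    root M i j ^ (2 * k) = 1 := by
  by_contra hr
  have hr' : (root M i j)⁻¹ ^ (2 * k) ≠ 1 := by
    rw [inv_pow]; simpa using hr
  have hX : ∀ r : ℂ, r ^ (2 * k) ≠ 1 → IsCoprime (X - C r) (X ^ (2 * k) - 1 : ℂ[X]) := by
    intro r hr
    refine (irreducible_X_sub_C r).coprime_iff_not_dvd.2 ?_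
    rw [dvd_iff_isRoot, IsRoot.def]
    simpa [sub_eq_zero] using hr
  obtain ⟨a, b, hab⟩ := (hX _ hr).mul_left (hX _ hr')
  have := congrArg (aeval (vec M i * vec M j)) hab
  rw [map_add, map_mul _ a, vec_poly] at this
  simp [h] at this

/-- The vector `v_i` as a unit; it is its own inverse. -/
def vunit (i : I) : (Cl M)ˣ := ⟨vec M i, vec M i, vec_sq M i, vec_sq M i⟩

theorem vunit_sq (i : I) : vunit M i * vunit M i = 1 := Units.ext (vec_sq M i)

/-- The signs in `vec_pow` are central, so conjugation by the `v_i` is an action of `W`. -/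
theorem conj_liftable : M.IsLiftable (fun i => MulAut.conj (vunit M i)) := by
  intro i j
  by_cases h : M i j = 0
  · rw [h, pow_zero]
  · rw [← map_mul, ← map_pow]
    have : (vunit M i * vunit M j) ^ M i j = (-1) ^ (M i j + 1) := by
      apply Units.ext
      have := vec_pow M i j h
      simpa [vunit] using this
    rw [this]
    ext1 x
    rcases neg_one_pow_eq_or (Cl M)ˣ (M i j + 1) with e | e <;> simp [e]

variable {M} {W : Type*} [Group W] (cs : CoxeterSystem M W)

/-- In every Coxeter system `s_i s_j` has order exactly `m_{ij}`, as conjugation by `v_i v_j`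
shows. -/
theorem exactOrder : ExactOrder cs := by
  intro i j hij k hk h
  have h1 := congrArg (cs.lift ⟨_, conj_liftable M⟩) h
  rw [map_pow, map_mul, cs.lift_apply_simple, cs.lift_apply_simple, ← map_mul, ← map_pow,
    map_one] at h1
  have h2 := DFunLike.congr_fun h1 (vunit M i)
  rw [MulAut.conj_apply, MulAut.one_apply, mul_inv_eq_iff_eq_mul] at h2
  -- conjugation by `v_i` inverts `v_i v_j`, so commuting with `v_i` forces exponent two
  have h3 : vunit M i * (vunit M i * vunit M j) ^ k =
      ((vunit M i * vunit M j) ^ k)⁻¹ * vunit M i := by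
    clear h h1 h2 hk
    induction k with
    | zero => simp
    | succ k ih =>
      rw [pow_succ, ← mul_assoc, ih, mul_assoc, mul_inv_rev, mul_inv_rev,
        inv_eq_of_mul_eq_one_right (vunit_sq M i), inv_eq_of_mul_eq_one_right (vunit_sq M j),
        ← inv_pow, mul_inv_rev, inv_eq_of_mul_eq_one_right (vunit_sq M i),
        inv_eq_of_mul_eq_one_right (vunit_sq M j), ← mul_assoc (vunit M i), vunit_sq, one_mul,
        ← pow_succ', pow_succ, mul_assoc, mul_assoc, vunit_sq, mul_one]
  rw [h3] at h2
  have h4 : (vunit M i * vunit M j) ^ (2 * k) = 1 := by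
    have := mul_right_cancel h2
    rw [two_mul, pow_add]
    nth_rw 1 [this]
    simp
  apply root_sq_pow M i j k hk
  apply root_pow_eq_one_of_vec_pow
  simpa [vunit] using congrArg Units.val h4

end Cliff

/-! ### The twisted nil-Coxeter representation -/

section Rep

/-- If the `X i` square to zero, only the two alternating words survive in a power of
`X i - X j`. -/
theorem sub_pow_alt {R I : Type*} [Ring R] [Algebra ℂ R] (X : I → R) (hX : ∀ i, X i * X i = 0)
    (i j : I) (n : ℕ) : ∃ c : ℂ, (X i - X j) ^ (n + 1) = c • (((alt i j (n + 1)).map X).prod +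
      (-1 : ℂ) ^ (n + 1) • ((alt j i (n + 1)).map X).prod) := by
  induction n with
  | zero => exact ⟨1, by simp [alt, sub_eq_add_neg]⟩
  | succ n ih =>
    obtain ⟨c, hc⟩ := ih
    have key : ∀ a b : I, ∀ m, X a * ((alt a b (m + 1)).map X).prod = 0 := by
      intro a b m
      rw [alt, List.map_cons, List.prod_cons, ← mul_assoc, hX, zero_mul]
    have key2 : ∀ a b : I, ∀ m, X a * ((alt b a m).map X).prod = ((alt a b (m + 1)).map X).prod := by
      intro a b m
      rw [alt, List.map_cons, List.prod_cons]
    refine ⟨c * (-1) ^ (n + 1), ?_⟩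
    have hs : ((-1 : ℂ) ^ (n + 1)) * (-1) ^ (n + 1) = 1 := by
      rw [← mul_pow]; simp
    rw [pow_succ', hc, mul_smul_comm, mul_smul]
    congr 1
    rw [sub_mul, mul_add, mul_add, mul_smul_comm, mul_smul_comm, key, key, key2, key2,
      smul_zero, zero_add, add_zero, smul_add, smul_smul, pow_succ _ (n + 1), ← mul_assoc, hs,
      one_mul, neg_one_smul, sub_eq_add_neg]

variable {I : Type*} [Fintype I] [DecidableEq I] {M : CoxeterMatrix I}
  {W : Type*} [Group W] (cs : CoxeterSystem M W)

/-- The operator `X_i` on functions `W → Cl M`: the nil-Coxeter generator `s_i` acting on functions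
on `W`, twisted by Clifford multiplication by `v_i`. -/
def nilOp (i : I) : Module.End ℂ (W → Cl M) where
  toFun f x := if cs.length (cs.simple i * x) < cs.length x then
    vec M i * f (cs.simple i * x) else 0
  map_add' f g := by
    ext x; simp only [Pi.add_apply]; split_ifs
    · rw [mul_add]
    · rw [add_zero]
  map_smul' c f := by
    ext x; simp only [Pi.smul_apply, RingHom.id_apply]; split_ifs
    · rw [mul_smul_comm]
    · rw [smul_zero]

theorem nilOp_apply (i : I) (f : W → Cl M) (x : W) : nilOp cs i f x =
    if cs.length (cs.simple i * x) < cs.length x then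
      vec M i * f (cs.simple i * x) else 0 := rfl

/-- A product of operators `X_i` along a word acts by zero wherever the word does not lower the length
by its full number of letters; elsewhere it acts by translation and the corresponding product of
the `v_i`. -/
theorem nilOp_word (ω : List I) (f : W → Cl M) (x : W) :
    (ω.map (nilOp cs)).prod f x =
      if cs.length ((cs.wordProd ω)⁻¹ * x) + ω.length = cs.length x then
        (ω.map (vec M)).prod * f ((cs.wordProd ω)⁻¹ * x) else 0 := by
  induction ω generalizing x with
  | nil => simp
  | cons i ω ih =>
    rw [List.map_cons, List.prod_cons, Module.End.mul_apply, nilOp_apply, ih, List.map_cons,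
      List.prod_cons, wordProd_cons, mul_inv_rev, inv_simple, mul_assoc, List.length_cons]
    set u := (cs.wordProd ω)⁻¹ * (cs.simple i * x) with hu
    have h1 : cs.length (cs.simple i * x) ≤ cs.length u + ω.length := by
      have : cs.simple i * x = cs.wordProd ω * u := by rw [hu, mul_inv_cancel_left]
      rw [this, add_comm]
      exact (cs.length_mul_le _ _).trans (Nat.add_le_add_right (cs.length_wordProd_le ω) _)
    have h2 := cs.length_simple_mul x i
    by_cases h : cs.length u + (ω.length + 1) = cs.length x
    · rw [if_pos h, if_pos (by omega), if_pos (by omega), mul_assoc]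
    · rw [if_neg h]
      split_ifs
      · omega
      · rw [mul_zero]
      · rfl

theorem nilOp_sq (i : I) : nilOp cs i * nilOp cs i = 0 := by
  ext1 f; funext x
  rw [Module.End.mul_apply, nilOp_apply, nilOp_apply, simple_mul_simple_cancel_left]
  split_ifs
  · omega
  · simp
  · rfl

/-- The signed braid relation of the `X_i`. -/
theorem nilOp_alt (i j : I) (h : M i j ≠ 0) : ((alt i j (M i j)).map (nilOp cs)).prod =
    (-1 : ℂ) ^ (M i j + 1) • ((alt j i (M i j)).map (nilOp cs)).prod := by
  ext1 f; funext x
  rw [LinearMap.smul_apply, Pi.smul_apply, nilOp_word, nilOp_word, length_alt, length_alt,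
    wordProd_alt_braid, alt_map_prod (vec M) (vec_sq M) i j, vec_pow M i j h]
  split_ifs
  · rw [Algebra.smul_def, map_pow, map_neg, map_one, mul_assoc]
  · rw [smul_zero]

/-- By the signed braid relation the two alternating words in `(X_i - X_j) ^ m_{ij}` cancel. -/
theorem nilOp_sub_pow (i j : I) (h : M i j ≠ 0) : (nilOp cs i - nilOp cs j) ^ M i j = 0 := by
  obtain ⟨n, hn⟩ := Nat.exists_eq_succ_of_ne_zero h
  obtain ⟨c, hc⟩ := sub_pow_alt (nilOp cs) (nilOp_sq cs) i j n
  have h1 := nilOp_alt cs i j h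
  rw [hn] at h1 ⊢
  rw [Nat.succ_eq_add_one] at h1 ⊢
  rw [hc, h1, pow_succ _ (n + 1), ← add_smul]
  simp

/-- The representation of `𝒜_{0+}` on functions `W → Cl M` in which `α_{ij}` acts as
`X_i - X_j`. -/
def rep : A0 M →ₐ[ℂ] Module.End ℂ (W → Cl M) :=
  RingQuot.liftAlgHom ℂ
    ⟨FreeAlgebra.lift ℂ fun g : Gens I => nilOp cs g.1.1 - nilOp cs g.1.2, by
      intro a b h
      cases h with
      | anti i j h => simp [agen]
      | triangle i j k hij hjk hki => simp [agen]
      | nil i j h hm => simpa [agen] using nilOp_sub_pow cs i j hm⟩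

theorem rep_al (i j : I) : rep cs (al M i j) = nilOp cs i - nilOp cs j := by
  by_cases h : i = j
  · subst h; rw [al_self, map_zero, sub_self]
  · rw [al, dif_pos h, mk, rep, RingQuot.liftAlgHom_mkAlgHom_apply, agen, FreeAlgebra.lift_ι_apply]

/-- Since `X_p ^ 2 = 0`, one has `X_p (X_p - X_i) = -X_p X_i`, and so on along the word. -/
theorem nilOp_mul_rep (p : I) (ω : List I) : nilOp cs p * rep cs (bProd M p ω) =
    (-1 : ℂ) ^ ω.length • ((p :: ω).map (nilOp cs)).prod := by
  induction ω generalizing p with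
  | nil => simp [bProd]
  | cons i ω ih =>
    have h : nilOp cs p * (nilOp cs p - nilOp cs i) = (-1 : ℂ) • (nilOp cs p * nilOp cs i) := by
      rw [mul_sub, nilOp_sq, zero_sub]; exact (neg_one_smul ℂ _).symm
    rw [bProd_cons, map_mul, rep_al, ← mul_assoc, h, smul_mul_assoc, mul_assoc, ih,
      mul_smul_comm, smul_smul, List.length_cons, pow_succ']
    simp only [List.map_cons, List.prod_cons]

/-- The linear map `a ↦ X_o (a · δ_1)`, which sends `b_x` to a function supported at `s_o x`. -/
def probe (o : I) : A0 M →ₗ[ℂ] (W → Cl M) := by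
  classical
  exact nilOp cs o ∘ₗ LinearMap.applyₗ (Pi.single (1 : W) (1 : Cl M)) ∘ₗ (rep cs).toLinearMap

open Classical in
theorem probe_bProd {o : I} {ω : List I} (h : cs.IsReduced (o :: ω)) (x : W) :
    probe cs o (bProd M o ω) x =
      if x = cs.wordProd (o :: ω) then
        (-1 : ℂ) ^ ω.length • ((o :: ω).map (vec M)).prod else 0 := by
  have : probe cs o (bProd M o ω) =
      (nilOp cs o * rep cs (bProd M o ω)) (Pi.single (1 : W) (1 : Cl M)) := rfl
  rw [this, nilOp_mul_rep, LinearMap.smul_apply, Pi.smul_apply, nilOp_word]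
  by_cases hx : x = cs.wordProd (o :: ω)
  · subst hx
    rw [if_pos rfl, inv_mul_cancel, length_one, zero_add, if_pos h.eq.symm, Pi.single_eq_same,
      mul_one]
  · rw [if_neg hx, Pi.single_eq_of_ne, mul_zero, ite_self, smul_zero]
    rwa [Ne, inv_mul_eq_one, eq_comm]

theorem vec_word_ne_zero (ω : List I) : (ω.map (vec M)).prod ≠ 0 := by
  have : (ω.map (vec M)).prod = ((ω.map (vunit M)).prod : (Cl M)ˣ) := by
    induction ω with
    | nil => simp
    | cons i ω ih => simp only [List.map_cons, List.prod_cons, ih, Units.val_mul]; rfl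
  rw [this]
  exact Units.ne_zero _

theorem reduced_cons_of_lt {o : I} {x : W} (hx : cs.length x < cs.length (cs.simple o * x))
    {ω : List I} (h : cs.wordProd ω = x ∧ cs.IsReduced ω) : cs.IsReduced (o :: ω) := by
  obtain ⟨rfl, h⟩ := h
  have := cs.length_simple_mul (cs.wordProd ω) o
  have h2 := h.eq
  unfold CoxeterSystem.IsReduced
  rw [wordProd_cons, List.length_cons]
  omega

theorem linearIndependent_bProd (o : I) (w : W → List I)
    (hw : ∀ x : W, cs.wordProd (w x) = x ∧ cs.IsReduced (w x)) :
    LinearIndependent ℂ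
        (fun x : {x : W // cs.length x < cs.length (cs.simple o * x)} => bProd M o (w x)) := by
  classical
  refine LinearIndependent.of_comp (probe cs o) ?_
  rw [linearIndependent_iff']
  intro s g hg y hy
  have h := congrFun hg (cs.wordProd (o :: w y))
  rw [Finset.sum_apply, Finset.sum_eq_single y] at h
  · rw [Pi.smul_apply, Function.comp_apply, probe_bProd cs (reduced_cons_of_lt cs y.2 (hw y)),
      if_pos rfl, Pi.zero_apply, smul_smul, smul_eq_zero] at h
    simpa using h.resolve_right (vec_word_ne_zero _)
  · intro x _ hxy
    rw [Pi.smul_apply, Function.comp_apply, probe_bProd cs (reduced_cons_of_lt cs x.2 (hw x)),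
      if_neg, smul_zero]
    rw [wordProd_cons, wordProd_cons, (hw _).1, (hw _).1, mul_right_inj]
    exact fun e => hxy (Subtype.ext e.symm)
  · exact fun h => absurd hy h

theorem filtration_eq_span (o : I) (w : W → List I)
    (hw : ∀ x : W, cs.wordProd (w x) = x ∧ cs.IsReduced (w x)) (n : ℕ) :
    filtration M n = Submodule.span ℂ (Set.range
      fun x : {x : W // cs.length x ≤ n ∧ cs.length x < cs.length (cs.simple o * x)} =>
        bProd M o (w x)) := by
  apply le_antisymm
  · refine Submodule.span_le.2 ?_
    rintro _ ⟨l, hl, rfl⟩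
    have h := list_prod_mem M o l
    refine Submodule.span_le.2 ?_ h
    rintro _ ⟨ω, hω, rfl⟩
    have hω : ω.length = l.length := hω
    rcases bProd_mem_span cs (exactOrder cs) o w hw ω with h0 | ⟨x, hx, hx', c, hc⟩
    · rw [h0]; exact zero_mem _
    · rw [hc]
      exact Submodule.smul_mem _ _ (Submodule.subset_span ⟨⟨x, by omega, hx'⟩, rfl⟩)
  · refine Submodule.span_le.2 ?_
    rintro _ ⟨⟨x, hx, -⟩, rfl⟩
    refine bProd_mem_filtration M o _ ?_
    have := (hw x).2.eq
    rw [(hw x).1] at this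
    exact this ▸ hx

theorem span_bProd (o : I) (w : W → List I)
    (hw : ∀ x : W, cs.wordProd (w x) = x ∧ cs.IsReduced (w x)) :
    Submodule.span ℂ (Set.range
      fun x : {x : W // cs.length x < cs.length (cs.simple o * x)} => bProd M o (w x)) = ⊤ := by
  rw [eq_top_iff, ← iSup_wordSpan M o, iSup_le_iff]
  intro n
  refine Submodule.span_le.2 ?_
  rintro _ ⟨ω, -, rfl⟩
  rcases bProd_mem_span cs (exactOrder cs) o w hw ω with h0 | ⟨x, -, hx', c, hc⟩
  · rw [h0]; exact zero_mem _
  · rw [hc]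
    exact Submodule.smul_mem _ _ (Submodule.subset_span ⟨⟨x, hx'⟩, rfl⟩)

theorem finrank_filtration (o : I) (w : W → List I)
    (hw : ∀ x : W, cs.wordProd (w x) = x ∧ cs.IsReduced (w x)) (n : ℕ) :
    Module.finrank ℂ (filtration M n) =
        Nat.card {x : W // cs.length x ≤ n ∧ cs.length x < cs.length (cs.simple o * x)} := by
  have h : LinearIndependent ℂ
      (fun x : {x : W // cs.length x ≤ n ∧ cs.length x < cs.length (cs.simple o * x)} =>
        bProd M o (w x)) :=
    (linearIndependent_bProd cs o w hw).comp
      (fun x : {x : W // cs.length x ≤ n ∧ cs.length x < cs.length (cs.simple o * x)} =>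
        (⟨x.1, x.2.2⟩ : {x : W // cs.length x < cs.length (cs.simple o * x)}))
      (fun x y hxy => Subtype.ext (Subtype.mk.inj hxy))
  rw [filtration_eq_span cs o w hw n, Module.finrank, rank_span h]
  exact Nat.card_range_of_injective h.injective

end Rep

end EvenAdd

open EvenAdd in
/-- Theorem 7.5 (ii) and (iv) of Etingof–Rains. -/
theorem theorem_7_5_ii_iv {I : Type*} [Fintype I] [DecidableEq I]
    {W : Type*} [Group W] (M : CoxeterMatrix I) (cs : CoxeterSystem M W)
    (o : I) (w : W → List I)
    (hw : ∀ x : W, cs.wordProd (w x) = x ∧ cs.IsReduced (w x)) :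
    (LinearIndependent ℂ
        (fun x : {x : W // cs.length x < cs.length (cs.simple o * x)} =>
          bProd M o (w x)) ∧
      Submodule.span ℂ
        (Set.range fun x : {x : W // cs.length x < cs.length (cs.simple o * x)} =>
          bProd M o (w x)) = ⊤) ∧
      ∀ n : ℕ, Module.finrank ℂ (filtration M n) =
        Nat.card {x : W // cs.length x ≤ n ∧ cs.length x < cs.length (cs.simple o * x)} := by
  exact ⟨⟨linearIndependent_bProd cs o w hw, span_bProd cs o w hw⟩, finrank_filtration cs o w hw⟩
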